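/- arXiv:1403.0246 — 3 statements merged into one kernel-verified Lean document; each statement's English description precedes it below -/
import Mathlib

section
/- Let g : [0,1] → ℝ be continuous and assume g is not monotone on any nontrivial subinterval of [0,1]. Then the set B = {b ∈ ℝ : the level set {x ∈ [0,1] : g(x) = b} is not perfect} is meagre in ℝ. -/
open Set Filter Metric Topology

lemma mono_aux (f : ℝ → ℝ) (a c : ℝ) (hac : a < c) (hf : ContinuousOn f (Icc a c))
    (hlt : f a < f c)
    (ha : ∀ x ∈ Icc a c, f x = f a → x = a) (hc : ∀ x ∈ Icc a c, f x = f c → x = c)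
    (hd : ∀ u v, f a ≤ u → u < v → v ≤ f c →
      ∃ b ∈ Ioo u v, ∀ x ∈ Icc a c, ∀ y ∈ Icc a c, f x = b → f y = b → x = y) :
    MonotoneOn f (Icc a c) := by
  have lo : ∀ x ∈ Icc a c, f a ≤ f x := by
    intro x hx
    by_contra! h
    obtain ⟨y, hy, hye⟩ := intermediate_value_Icc hx.2
      (hf.mono (Icc_subset_Icc hx.1 le_rfl)) ⟨h.le, hlt.le⟩
    have h1 := ha y ⟨hx.1.trans hy.1, hy.2⟩ hye
    have h2 : x = a := le_antisymm (h1 ▸ hy.1) hx.1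
    rw [h2] at h
    exact lt_irrefl _ h
  have hi : ∀ x ∈ Icc a c, f x ≤ f c := by
    intro x hx
    by_contra! h
    obtain ⟨y, hy, hye⟩ := intermediate_value_Icc hx.1
      (hf.mono (Icc_subset_Icc le_rfl hx.2)) ⟨hlt.le, h.le⟩
    have h1 := hc y ⟨hy.1, hy.2.trans hx.2⟩ hye
    have h2 : x = c := le_antisymm hx.2 (h1 ▸ hy.2)
    rw [h2] at h
    exact lt_irrefl _ h
  intro u hu v hv huv
  by_contra! h
  obtain ⟨b, hb, hun⟩ := hd (f v) (f u) (lo v hv) h (hi u hu)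
  obtain ⟨y, hy, hye⟩ := intermediate_value_Icc hu.1
    (hf.mono (Icc_subset_Icc le_rfl hu.2)) ⟨(lo v hv).trans hb.1.le, hb.2.le⟩
  obtain ⟨z, hz, hze⟩ := intermediate_value_Icc' huv
    (hf.mono (Icc_subset_Icc hu.1 hv.2)) ⟨hb.1.le, hb.2.le⟩
  have := hun y ⟨hy.1, hy.2.trans hu.2⟩ z ⟨hu.1.trans hz.1, hz.2.trans hv.2⟩ hye hze
  have hyu : y = u := le_antisymm hy.2 (this ▸ hz.1)
  rw [hyu] at hye
  exact hb.2.ne' hye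

lemma nd_aux (g : ℝ → ℝ) (p q : ℝ) (hg : ContinuousOn g (Icc p q))
    (hnm : ∀ c d : ℝ, p ≤ c → c < d → d ≤ q →
      ¬ (MonotoneOn g (Icc c d) ∨ AntitoneOn g (Icc c d))) :
    IsNowhereDense {b : ℝ | ∃ x ∈ Icc p q, g x = b ∧ ∀ y ∈ Icc p q, g y = b → y = x} := by
  set E := {b : ℝ | ∃ x ∈ Icc p q, g x = b ∧ ∀ y ∈ Icc p q, g y = b → y = x} with hE
  rw [IsNowhereDense, ← not_nonempty_iff_eq_empty]
  rintro ⟨t, ht⟩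
  obtain ⟨c, d, htcd, hsub⟩ := (mem_nhds_iff_exists_Ioo_subset).1 (mem_interior_iff_mem_nhds.1 ht)
  have dense : ∀ u v, c ≤ u → u < v → v ≤ d → ∃ b ∈ Ioo u v, b ∈ E := by
    intro u v hu huv hv
    obtain ⟨m, hm⟩ := exists_between huv
    have hmc : m ∈ closure E := hsub ⟨hu.trans_lt hm.1, hm.2.trans_le hv⟩
    exact mem_closure_iff.1 hmc _ isOpen_Ioo hm
  obtain ⟨b1, h1, x1, hx1, e1, u1⟩ := dense c t le_rfl htcd.1 htcd.2.le
  obtain ⟨b2, h2, x2, hx2, e2, u2⟩ := dense t d htcd.1.le htcd.2 le_rfl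
  subst e1 e2
  have hlt : g x1 < g x2 := h1.2.trans h2.1
  rcases lt_trichotomy x1 x2 with h | h | h
  · have hs : Icc x1 x2 ⊆ Icc p q := Icc_subset_Icc hx1.1 hx2.2
    refine hnm x1 x2 hx1.1 h hx2.2 (Or.inl (mono_aux g x1 x2 h (hg.mono hs) hlt
      (fun x hx => u1 x (hs hx)) (fun x hx => u2 x (hs hx)) ?_))
    intro u v hu huv hv
    obtain ⟨b, hb, z, hz, ez, uz⟩ := dense u v (h1.1.le.trans hu) huv (hv.trans h2.2.le)
    exact ⟨b, hb, fun x hx y hy ex ey => (uz x (hs hx) ex).trans (uz y (hs hy) ey).symm⟩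
  · rw [h] at hlt
    exact lt_irrefl _ hlt
  · have hs : Icc x2 x1 ⊆ Icc p q := Icc_subset_Icc hx2.1 hx1.2
    have := mono_aux (fun x => - g x) x2 x1 h (hg.mono hs).neg (neg_lt_neg hlt)
      (fun x hx e => u2 x (hs hx) (neg_injective e)) (fun x hx e => u1 x (hs hx) (neg_injective e))
      (by
        intro u v hu huv hv
        obtain ⟨b, hb, z, hz, ez, uz⟩ := dense (-v) (-u) (by linarith [h1.1]) (by linarith)
          (by linarith [h2.2])
        exact ⟨-b, ⟨by linarith [hb.2], by linarith [hb.1]⟩, fun x hx y hy ex ey =>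
          (uz x (hs hx) (neg_injective ex)).trans (uz y (hs hy) (neg_injective ey)).symm⟩)
    exact hnm x2 x1 hx2.1 h hx1.2 (Or.inr fun x hx y hy hxy => neg_le_neg_iff.1 (this hx hy hxy))

/-- **Lemma 2.3.** If `g : [0,1] → ℝ` is continuous and not monotone on any
nontrivial subinterval of `[0,1]`, then the set of values `b` whose level set
`{x ∈ [0,1] : g x = b}` is not perfect is meagre in `ℝ`. -/
theorem meagre_nonperfect_levels (g : ℝ → ℝ)
    (hg : ContinuousOn g (Icc 0 1))
    (hnm : ∀ c d : ℝ, 0 ≤ c → c < d → d ≤ 1 →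
      ¬ (MonotoneOn g (Icc c d) ∨ AntitoneOn g (Icc c d))) :
    IsMeagre {b : ℝ | ¬ Perfect {x : ℝ | x ∈ Icc (0:ℝ) 1 ∧ g x = b}} := by
  have key : IsMeagre (⋃ r : ℚ × ℚ, {b : ℝ | 0 ≤ (r.1 : ℝ) ∧ (r.2 : ℝ) ≤ 1 ∧
      ∃ x ∈ Icc (r.1 : ℝ) r.2, g x = b ∧ ∀ y ∈ Icc (r.1 : ℝ) r.2, g y = b → y = x}) := by
    refine isMeagre_iUnion fun r => ?_
    by_cases h : 0 ≤ (r.1 : ℝ) ∧ (r.2 : ℝ) ≤ 1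
    · refine (nd_aux g r.1 r.2 (hg.mono (Icc_subset_Icc h.1 h.2)) ?_).isMeagre.mono
        (fun b hb => hb.2.2)
      intro c d hc hcd hd
      exact hnm c d (h.1.trans hc) hcd (hd.trans h.2)
    · convert IsMeagre.empty
      ext b
      simp only [mem_setOf_eq, mem_empty_iff_false, iff_false]
      exact fun hb => h ⟨hb.1, hb.2.1⟩
  have sing : ∀ a : ℝ, IsMeagre ({a} : Set ℝ) := fun a => by
    refine IsNowhereDense.isMeagre ?_
    rw [IsNowhereDense, closure_singleton, interior_singleton]
  refine (((sing (g 0)).union (sing (g 1))).union key).mono ?_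
  intro b hb
  by_contra hcon
  simp only [mem_union, mem_singleton_iff, mem_iUnion, not_or, not_exists] at hcon
  obtain ⟨⟨hb0, hb1⟩, hr⟩ := hcon
  refine hb ⟨?_, ?_⟩
  · exact hg.preimage_isClosed_of_isClosed isClosed_Icc (isClosed_singleton (x := b))
  · intro x hx
    rw [accPt_iff_nhds]
    intro U hU
    by_contra! hno
    have hx0 : 0 < x := lt_of_le_of_ne hx.1.1 (fun h => hb0 (by rw [h, hx.2]))
    have hx1 : x < 1 := lt_of_le_of_ne hx.1.2 (fun h => hb1 (by rw [← h, hx.2]))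
    obtain ⟨l, u, hlu, hsub⟩ := mem_nhds_iff_exists_Ioo_subset.1 hU
    obtain ⟨p, hp1, hp2⟩ := exists_rat_btwn (max_lt hlu.1 hx0)
    obtain ⟨q, hq1, hq2⟩ := exists_rat_btwn (lt_min hlu.2 hx1)
    rw [max_lt_iff] at hp1
    rw [lt_min_iff] at hq2
    refine hr (p, q) ⟨hp1.2.le, hq2.2.le, x, ⟨hp2.le, hq1.le⟩, hx.2, ?_⟩
    intro y hy hye
    exact hno y ⟨hsub ⟨hp1.1.trans_le hy.1, hy.2.trans_lt hq2.1⟩,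
      ⟨hp1.2.le.trans hy.1, hy.2.trans hq2.2.le⟩, hye⟩
end

section
/- Let Δ > 0 and let F : [0,Δ) → ℝ be convex and differentiable with F(0) = 0, whose derivative f is continuous and increasing with f(0) = 0, and assume liminf_{x→0⁺} f(x)/x = 0 and limsup_{x→0⁺} f(x)/x = ∞. Let v = (v₁, v₂) ∈ ℝ² with v₁ < 0 and v₂ > 0. For x ∈ [0,Δ) put z(x) = (x, F(x)), let N(z(x)) be the normal line to the graph of F at z(x), and let R(z(x)) be the reflection across N(z(x)) of the line through v and z(x); whenever R(z(x)) and R(z(0)) intersect in a single point, let y(x) denote the second coordinate of that point. Then for every ε > 0 there exist x₁, x₂ ∈ (0, ε) such that y(x₁) < 0 and 0 < y(x₂) < ε. -/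
open Set Filter Metric Topology

noncomputable section

/-- The Euclidean inner product on `ℝ × ℝ`. -/
def ip (a b : ℝ × ℝ) : ℝ := a.1 * b.1 + a.2 * b.2

/-- Reflection of the point `q` across the line through `p` with direction `d`. -/
def reflAcrossLine (p d q : ℝ × ℝ) : ℝ × ℝ :=
  p + (2 * ip (q - p) d / ip d d) • d - (q - p)

/-- The line through the points `v` and `w`. -/
def lineThrough (v w : ℝ × ℝ) : Set (ℝ × ℝ) :=
  {p : ℝ × ℝ | ∃ t : ℝ, p = v + t • (w - v)}

/-- The point `z(x) = (x, F x)` on the graph of `F`. -/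
def zpt (F : ℝ → ℝ) (x : ℝ) : ℝ × ℝ := (x, F x)

/-- A direction vector of the normal line `N(z(x))` of the graph of `F` at `z(x)`,
perpendicular to the tangent direction `(1, f x)`. -/
def normalDir (f : ℝ → ℝ) (x : ℝ) : ℝ × ℝ := (-(f x), 1)

/-- `R(z(x))`: the reflection across the normal line `N(z(x))` of the line
through `v` and `z(x)`. -/
def Rline (F f : ℝ → ℝ) (v : ℝ × ℝ) (x : ℝ) : Set (ℝ × ℝ) :=
  (reflAcrossLine (zpt F x) (normalDir f x)) '' lineThrough v (zpt F x)

theorem mem_Rline_iff (F f : ℝ → ℝ) (v : ℝ × ℝ) (x : ℝ) (p : ℝ × ℝ) :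
    p ∈ Rline F f v x ↔ ∃ s : ℝ,
      p = (x + s * ((f x ^ 2 - 1) * (v.1 - x) - 2 * f x * (v.2 - F x)),
        F x + s * ((1 - f x ^ 2) * (v.2 - F x) - 2 * f x * (v.1 - x))) := by
  obtain ⟨a, b⟩ := v
  have h1 : f x * f x + 1 ≠ 0 := by nlinarith [mul_self_nonneg (f x)]
  have h2 : f x ^ 2 + 1 ≠ 0 := by positivity
  simp only [Rline, lineThrough, reflAcrossLine, zpt, normalDir, ip, Set.mem_image,
    Set.mem_ofPred_eq]
  constructor
  · rintro ⟨q, ⟨t, rfl⟩, rfl⟩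
    refine ⟨(1 - t) / (f x ^ 2 + 1), ?_⟩
    ext <;> simp <;> field_simp <;> ring
  · rintro ⟨s, rfl⟩
    refine ⟨_, ⟨1 - s * (f x ^ 2 + 1), rfl⟩, ?_⟩
    ext <;> simp <;> field_simp <;> ring

theorem inter_eq (F f : ℝ → ℝ) (v : ℝ × ℝ) (x : ℝ) (hF0 : F 0 = 0) (hf0 : f 0 = 0)
    (D1 D2 : ℝ)
    (hD1 : D1 = (f x ^ 2 - 1) * (v.1 - x) - 2 * f x * (v.2 - F x))
    (hD2 : D2 = (1 - f x ^ 2) * (v.2 - F x) - 2 * f x * (v.1 - x))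
    (hden : -v.1 * D2 - v.2 * D1 ≠ 0) :
    Rline F f v x ∩ Rline F f v 0 =
      {((x * D2 - F x * D1) / (-v.1 * D2 - v.2 * D1) * -v.1,
        (x * D2 - F x * D1) / (-v.1 * D2 - v.2 * D1) * v.2)} := by
  ext p
  rw [Set.mem_inter_iff, mem_Rline_iff, mem_Rline_iff, ← hD1, ← hD2, hF0, hf0,
    Set.mem_singleton_iff]
  constructor
  · rintro ⟨⟨s, rfl⟩, ⟨t, h⟩⟩
    rw [Prod.mk.injEq] at h
    obtain ⟨h1, h2⟩ := h
    have ht : (x * D2 - F x * D1) / (-v.1 * D2 - v.2 * D1) = t := by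
      rw [div_eq_iff hden]
      linear_combination D2 * h1 - D1 * h2
    rw [ht, Prod.mk.injEq]
    constructor
    · rw [h1]; ring
    · rw [h2]; ring
  · rintro rfl
    constructor
    · refine ⟨(-x * v.2 - F x * v.1) / (-v.1 * D2 - v.2 * D1) * (-1), ?_⟩
      generalize hd : -v.1 * D2 - v.2 * D1 = d at hden ⊢
      ext
      · simp only
        field_simp
        rw [← hd]
        ring
      · simp only
        field_simp
        rw [← hd]
        ring
    · refine ⟨(x * D2 - F x * D1) / (-v.1 * D2 - v.2 * D1), ?_⟩
      ext <;> simp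

theorem F_bounds (Δ : ℝ) (F f : ℝ → ℝ) (hF0 : F 0 = 0)
    (hderiv : ∀ x ∈ Ico 0 Δ, HasDerivWithinAt F (f x) (Ico 0 Δ) x)
    (hfm : MonotoneOn f (Ico 0 Δ)) (hf0 : f 0 = 0) (x : ℝ) (hx : 0 < x) (hxΔ : x < Δ) :
    0 ≤ f x ∧ 0 ≤ F x ∧ F x ≤ x * f x := by
  have hsub : Icc 0 x ⊆ Ico 0 Δ := fun y hy => ⟨hy.1, hy.2.trans_lt hxΔ⟩
  obtain ⟨c, hc, hceq⟩ := exists_hasDerivAt_eq_slope F f hx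
    (fun y hy => (hderiv y (hsub hy)).continuousWithinAt.mono hsub)
    (fun y hy => (hderiv y (hsub ⟨hy.1.le, hy.2.le⟩)).hasDerivAt
      (Ico_mem_nhds hy.1 (hy.2.trans hxΔ)))
  have h0 : (0 : ℝ) ∈ Ico 0 Δ := ⟨le_rfl, hx.trans hxΔ⟩
  have hcm : c ∈ Ico 0 Δ := ⟨hc.1.le, hc.2.trans hxΔ⟩
  have hxm : x ∈ Ico 0 Δ := ⟨hx.le, hxΔ⟩
  have a1 := hfm h0 hcm hc.1.le
  have a2 := hfm hcm hxm hc.2.le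
  rw [hf0] at a1
  rw [hF0, sub_zero, sub_zero, eq_div_iff hx.ne'] at hceq
  refine ⟨a1.trans a2, ?_, ?_⟩
  · rw [← hceq]; positivity
  · rw [← hceq]; nlinarith

/-- Numerator bounds; `g = f x`, `G = F x`. -/
theorem num_bounds (a b x g G : ℝ) (ha : 0 < a) (hb : 0 < b) (hx : 0 < x) (hx1 : x ≤ 1)
    (hxb : x ≤ b / 2) (hg : 0 ≤ g) (hg1 : g ≤ 1 / 2) (hgb : g * (a + 1) ≤ b / 4)
    (hG : 0 ≤ G) (hGx : G ≤ x * g) :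
    0 < x * ((1 - g ^ 2) * (b - G) + 2 * g * (a + x))
        - G * ((1 - g ^ 2) * (a + x) - 2 * g * (b - G)) ∧
    x * ((1 - g ^ 2) * (b - G) + 2 * g * (a + x))
        - G * ((1 - g ^ 2) * (a + x) - 2 * g * (b - G)) ≤ x * (2 * b + a + 1) := by
  have hGx' : G ≤ x := by nlinarith
  have hGb : G ≤ b / 2 := hGx'.trans hxb
  have hg2 : g ^ 2 ≤ 1 / 4 := by nlinarith
  have e1 : 3 / 8 * b ≤ (1 - g ^ 2) * (b - G) := by nlinarith
  have e2 : (1 - g ^ 2) * (b - G) ≤ b := by nlinarith [sq_nonneg g]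
  have e3 : 0 ≤ 2 * g * (a + x) := by positivity
  have e4 : 2 * g * (a + x) ≤ a + 1 := by nlinarith
  have e5 : 0 ≤ (1 - g ^ 2) * (a + x) := by nlinarith
  have e6 : (1 - g ^ 2) * (a + x) ≤ a + 1 := by nlinarith [sq_nonneg g]
  have e7 : 0 ≤ 2 * g * (b - G) := by
    have : 0 ≤ b - G := by linarith
    positivity
  have e8 : 2 * g * (b - G) ≤ b := by nlinarith
  generalize (1 - g ^ 2) * (b - G) = A at *
  generalize 2 * g * (a + x) = B at *
  generalize (1 - g ^ 2) * (a + x) = C at *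
  generalize 2 * g * (b - G) = E at *
  constructor
  · have h1 : G * (C - E) ≤ G * (a + 1) := mul_le_mul_of_nonneg_left (by linarith) hG
    have h2 : G * (a + 1) ≤ x * g * (a + 1) := mul_le_mul_of_nonneg_right hGx (by linarith)
    have h3 : x * (g * (a + 1)) ≤ x * (b / 4) := mul_le_mul_of_nonneg_left hgb hx.le
    have h4 : x * (3 / 8 * b) ≤ x * (A + B) := mul_le_mul_of_nonneg_left (by linarith) hx.le
    have := mul_pos hx hb
    nlinarith
  · have h1 : G * (C - E) ≥ G * (-b) := mul_le_mul_of_nonneg_left (by linarith) hG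
    have h2 : G * b ≤ x * b := mul_le_mul_of_nonneg_right hGx' hb.le
    have h4 : x * (A + B) ≤ x * (b + a + 1) := mul_le_mul_of_nonneg_left (by linarith) hx.le
    nlinarith

theorem den_lower (a b x g G : ℝ) (ha : 0 < a) (hb : 0 < b) (hx : 0 < x)
    (hxb : x ≤ b / 2) (hg : 0 ≤ g) (hg1 : g ≤ 1 / 2) (hG : 0 ≤ G) (hGx : G ≤ x * g) :
    g * (a ^ 2 + b ^ 2) - (a + b) * x ≤
      a * ((1 - g ^ 2) * (b - G) + 2 * g * (a + x))
        - b * ((1 - g ^ 2) * (a + x) - 2 * g * (b - G)) := by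
  have hGx' : G ≤ x := by nlinarith
  have hGb : G ≤ b / 2 := hGx'.trans hxb
  have h1 : 0 ≤ g ^ 2 * (a * G + b * x) := by positivity
  have h2 : a * G ≤ a * x := mul_le_mul_of_nonneg_left hGx' ha.le
  have h3 : 0 ≤ g * (a * x) := by positivity
  have h4 : g * (b * G) ≤ g * (b * (b / 2)) := by gcongr
  have h5 : 0 ≤ g * a ^ 2 := by positivity
  nlinarith

theorem den_upper (a b x g G : ℝ) (ha : 0 < a) (hb : 0 < b) (hx : 0 < x) (hx1 : x ≤ 1)
    (hg : 0 ≤ g) (hg1 : g ≤ 1 / 2) (hG : 0 ≤ G) :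
    a * ((1 - g ^ 2) * (b - G) + 2 * g * (a + x))
        - b * ((1 - g ^ 2) * (a + x) - 2 * g * (b - G)) ≤
      2 * g * (a ^ 2 + b ^ 2 + a) - 3 / 4 * (b * x) := by
  have hg2 : g ^ 2 ≤ 1 / 4 := by nlinarith
  have h1 : 0 ≤ (1 - g ^ 2) * (a * G) := mul_nonneg (by linarith) (by positivity)
  have h2 : 3 / 4 * (b * x) ≤ (1 - g ^ 2) * (b * x) :=
    mul_le_mul_of_nonneg_right (by linarith) (by positivity)
  have h3 : g * (a * x) ≤ g * (a * 1) := by gcongr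
  have h4 : 0 ≤ g * (b * G) := by positivity
  nlinarith

/-- **Claim 4.2.** Let `F : [0,Δ) → ℝ` be convex and differentiable with
`F 0 = 0`, derivative `f` continuous and increasing with `f 0 = 0`, with
`liminf_{x→0⁺} f x / x = 0` and `limsup_{x→0⁺} f x / x = ∞`; let `v = (v₁, v₂)` with
`v₁ < 0 < v₂`. Whenever `R(z(x))` and `R(z(0))` meet in a single point, `y(x)` denotes
its second coordinate. Then for every `ε > 0` there are `x₁, x₂ ∈ (0, ε)` with
`y x₁ < 0` and `0 < y x₂ < ε`. -/
theorem reflected_rays_oscillate (Δ : ℝ) (hΔ : 0 < Δ) (F f : ℝ → ℝ)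
    (hconv : ConvexOn ℝ (Ico 0 Δ) F) (hF0 : F 0 = 0)
    (hderiv : ∀ x ∈ Ico 0 Δ, HasDerivWithinAt F (f x) (Ico 0 Δ) x)
    (hfc : ContinuousOn f (Ico 0 Δ)) (hfm : MonotoneOn f (Ico 0 Δ)) (hf0 : f 0 = 0)
    (hliminf : ∀ ε > (0 : ℝ), ∃ᶠ x in 𝓝[>] (0 : ℝ), f x / x < ε)
    (hlimsup : ∀ M : ℝ, ∃ᶠ x in 𝓝[>] (0 : ℝ), M < f x / x)
    (v : ℝ × ℝ) (hv1 : v.1 < 0) (hv2 : 0 < v.2) :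
    ∀ ε > (0 : ℝ),
      (∃ x₁ : ℝ, x₁ ∈ Ioo 0 ε ∧ x₁ < Δ ∧
        ∃ w : ℝ × ℝ, Rline F f v x₁ ∩ Rline F f v 0 = {w} ∧ w.2 < 0) ∧
      (∃ x₂ : ℝ, x₂ ∈ Ioo 0 ε ∧ x₂ < Δ ∧
        ∃ w : ℝ × ℝ, Rline F f v x₂ ∩ Rline F f v 0 = {w} ∧ 0 < w.2 ∧ w.2 < ε) := by
  intro ε hε
  obtain ⟨v1, b⟩ := v
  obtain ⟨a, rfl⟩ : ∃ a, v1 = -a := ⟨-v1, by ring⟩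
  simp only at hv1 hv2
  have ha : 0 < a := by linarith
  have hb : 0 < b := hv2
  have hx0 : ∀ c > (0 : ℝ), ∀ᶠ x in 𝓝[>] (0 : ℝ), 0 < x ∧ x < c := fun c hc =>
    Ioo_mem_nhdsGT hc
  have hfs : ∀ c > (0 : ℝ), ∀ᶠ x in 𝓝[>] (0 : ℝ), f x < c := by
    intro c hc
    have h1 : Tendsto f (𝓝[Ico 0 Δ] 0) (𝓝 0) := by
      have := hfc 0 ⟨le_rfl, hΔ⟩
      rwa [ContinuousWithinAt, hf0] at this
    have h2 : 𝓝[>] (0 : ℝ) ≤ 𝓝[Ico 0 Δ] 0 := by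
      rw [← nhdsWithin_Ioo_eq_nhdsGT hΔ]
      exact nhdsWithin_mono _ Ioo_subset_Ico_self
    exact (h1.mono_left h2).eventually (gt_mem_nhds hc)
  have hev : ∀ᶠ x in 𝓝[>] (0 : ℝ), (0 < x ∧ x < ε ∧ x < Δ ∧ x ≤ 1 ∧ x ≤ b / 2) ∧
      (0 ≤ f x ∧ f x ≤ 1 / 2 ∧ f x * (a + 1) ≤ b / 4) ∧ 0 ≤ F x ∧ F x ≤ x * f x := by
    filter_upwards [hx0 ε hε, hx0 Δ hΔ, hx0 1 one_pos, hx0 (b / 2) (by positivity),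
      hfs (1 / 2) (by norm_num), hfs (b / 4 / (a + 1)) (by positivity)]
      with x h1 h2 h3 h4 h5 h6
    obtain ⟨k1, k2, k3⟩ := F_bounds Δ F f hF0 hderiv hfm hf0 x h1.1 h2.2
    rw [lt_div_iff₀ (by positivity)] at h6
    exact ⟨⟨h1.1, h1.2, h2.2, h3.2.le, h4.2.le⟩, ⟨k1, h5.le, h6.le⟩, k2, k3⟩
  have hL : 0 < a ^ 2 + b ^ 2 := by positivity
  constructor
  · obtain ⟨x, hfx, ⟨hx, hxε, hxΔ, hx1, hxb⟩, ⟨hg, hg1, hgb⟩, hG, hGx⟩ :=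
      ((hliminf (b / (4 * (a ^ 2 + b ^ 2 + a))) (by positivity)).and_eventually hev).exists
    rw [div_lt_iff₀ hx, div_mul_eq_mul_div, lt_div_iff₀ (by positivity)] at hfx
    have hn := (num_bounds a b x (f x) (F x) ha hb hx hx1 hxb hg hg1 hgb hG hGx).1
    have hd := den_upper a b x (f x) (F x) ha hb hx hx1 hg hg1 hG
    have hbx : 0 < b * x := by positivity
    have hden : - (-a) * ((1 - f x ^ 2) * (b - F x) + 2 * f x * (a + x))
        - b * ((1 - f x ^ 2) * (a + x) - 2 * f x * (b - F x)) < 0 := by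
      rw [neg_neg]; nlinarith
    refine ⟨x, ⟨hx, hxε⟩, hxΔ, _, inter_eq F f (-a, b) x hF0 hf0 _ _ ?_ ?_ hden.ne, ?_⟩
    · ring
    · ring
    · exact mul_neg_of_neg_of_pos (div_neg_of_pos_of_neg hn hden) hb
  · obtain ⟨x, hfx, ⟨hx, hxε, hxΔ, hx1, hxb⟩, ⟨hg, hg1, hgb⟩, hG, hGx⟩ :=
      ((hlimsup ((a + b + b * (2 * b + a + 1) / ε) / (a ^ 2 + b ^ 2))).and_eventually hev).exists
    rw [lt_div_iff₀ hx, div_mul_eq_mul_div, div_lt_iff₀ hL] at hfx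
    obtain ⟨hn, hn2⟩ := num_bounds a b x (f x) (F x) ha hb hx hx1 hxb hg hg1 hgb hG hGx
    have hd := den_lower a b x (f x) (F x) ha hb hx hxb hg hg1 hG hGx
    have hK : 0 < b * (2 * b + a + 1) / ε * x := by positivity
    have hd2 : b * (2 * b + a + 1) / ε * x <
        - (-a) * ((1 - f x ^ 2) * (b - F x) + 2 * f x * (a + x))
        - b * ((1 - f x ^ 2) * (a + x) - 2 * f x * (b - F x)) := by
      rw [neg_neg]; linarith
    have hden := hK.trans hd2
    refine ⟨x, ⟨hx, hxε⟩, hxΔ, _, inter_eq F f (-a, b) x hF0 hf0 _ _ ?_ ?_ hden.ne', ?_, ?_⟩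
    · ring
    · ring
    · exact mul_pos (div_pos hn hden) hb
    · simp only
      rw [div_mul_eq_mul_div, div_lt_iff₀ hden]
      rw [div_mul_eq_mul_div, div_lt_iff₀ hε] at hd2
      have := mul_le_mul_of_nonneg_right hn2 hb.le
      linarith
end
end

section
/- Let J ⊂ ℝ be a nonempty open interval, let F : J → ℝ be convex and differentiable with derivative f = F' continuous and increasing, and let u₂ ∈ ℝ satisfy u₂ > F(x) for all x ∈ J. Assume that the set {x ∈ J : f is differentiable at x and f'(x) = 0} is dense in J and that the set {x ∈ J : lim_{y→x} (f(y) − f(x))/(y − x) = ∞} is dense in J. Then the function g(x) = (u₂ − F(x))·f(x) − x is not monotone on any nontrivial subinterval of J. -/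
open Set Filter Metric Topology

/-- Let `J = (a, b)` be a nonempty open interval, `F : J → ℝ` convex and
differentiable with derivative `f` continuous and increasing, and `u₂ > F x` on `J`.
If both `{x ∈ J : f differentiable at x with f' x = 0}` and
`{x ∈ J : lim (f y - f x)/(y - x) = ∞}` are dense in `J`, then
`g x = (u₂ - F x) * f x - x` is not monotone on any nontrivial subinterval of `J`. -/
theorem g_not_monotone (a b : ℝ) (hab : a < b) (F f : ℝ → ℝ) (u₂ : ℝ)
    (hconv : ConvexOn ℝ (Ioo a b) F)
    (hderiv : ∀ x ∈ Ioo a b, HasDerivAt F (f x) x)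
    (hfc : ContinuousOn f (Ioo a b))
    (hfm : MonotoneOn f (Ioo a b))
    (hu₂ : ∀ x ∈ Ioo a b, F x < u₂)
    (hd0 : ∀ x ∈ Ioo a b, x ∈ closure {y : ℝ | y ∈ Ioo a b ∧ HasDerivAt f 0 y})
    (hdinf : ∀ x ∈ Ioo a b, x ∈ closure {y : ℝ | y ∈ Ioo a b ∧
      Tendsto (fun t : ℝ => (f t - f y) / (t - y)) (𝓝[≠] y) atTop}) :
    ∀ c d : ℝ, c < d → Icc c d ⊆ Ioo a b →
      ¬ (MonotoneOn (fun x : ℝ => (u₂ - F x) * f x - x) (Icc c d) ∨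
         AntitoneOn (fun x : ℝ => (u₂ - F x) * f x - x) (Icc c d)) := by
  intro c d hcd hsub
  have hmid : (c + d) / 2 ∈ Ioo c d := ⟨by linarith, by linarith⟩
  have hmidJ := hsub (Ioo_subset_Icc_self hmid)
  rintro (hm | hm)
  · obtain ⟨y, hy, hyJ, hy0⟩ :=
      mem_closure_iff.1 (hd0 _ hmidJ) (Ioo c d) isOpen_Ioo hmid
    have hg : HasDerivAt (fun x : ℝ => (u₂ - F x) * f x - x)
        ((-f y) * f y + (u₂ - F y) * 0 - 1) y :=
      (((hderiv y hyJ).const_sub u₂).mul hy0).sub (hasDerivAt_id y)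
    have hs := hasDerivAt_iff_tendsto_slope.1 hg
    have hnn : 0 ≤ (-f y) * f y + (u₂ - F y) * 0 - 1 := by
      refine ge_of_tendsto hs ?_
      filter_upwards [mem_nhdsWithin_of_mem_nhds (isOpen_Ioo.mem_nhds hy)] with t ht
      rw [slope_def_field]
      rcases le_total y t with h | h
      · exact div_nonneg
          (sub_nonneg.2 (hm (Ioo_subset_Icc_self hy) (Ioo_subset_Icc_self ht) h))
          (sub_nonneg.2 h)
      · exact div_nonneg_of_nonpos
          (sub_nonpos.2 (hm (Ioo_subset_Icc_self ht) (Ioo_subset_Icc_self hy) h))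
          (sub_nonpos.2 h)
    nlinarith [sq_nonneg (f y)]
  · obtain ⟨y, hy, hyJ, hyi⟩ :=
      mem_closure_iff.1 (hdinf _ hmidJ) (Ioo c d) isOpen_Ioo hmid
    have hF := hasDerivAt_iff_tendsto_slope.1 (hderiv y hyJ)
    have hFc : Tendsto (fun t => u₂ - F t) (𝓝[≠] y) (𝓝 (u₂ - F y)) :=
      ((hderiv y hyJ).continuousAt.tendsto.mono_left nhdsWithin_le_nhds).const_sub u₂
    have h1 := hFc.pos_mul_atTop (sub_pos.2 (hu₂ y hyJ)) hyi
    have h2 := h1.atTop_add ((hF.const_mul (-f y)).sub_const 1)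
    have hev := h2.eventually (eventually_gt_atTop 0)
    have hev2 : ∀ᶠ t in 𝓝[≠] y, t ∈ Ioo c d ∧ t ≠ y :=
      Filter.Eventually.and (mem_nhdsWithin_of_mem_nhds (isOpen_Ioo.mem_nhds hy))
        self_mem_nhdsWithin
    obtain ⟨t, h0, ht, hty⟩ := (hev.and hev2).exists
    have hne : t - y ≠ 0 := sub_ne_zero.2 hty
    have heq : (u₂ - F t) * ((f t - f y) / (t - y)) + (-f y * slope F y t - 1)
        = (((u₂ - F t) * f t - t) - ((u₂ - F y) * f y - y)) / (t - y) := by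
      rw [slope_def_field]
      field_simp
      ring
    rw [heq] at h0
    refine absurd h0 (not_lt.2 ?_)
    rcases le_total y t with h | h
    · exact div_nonpos_of_nonpos_of_nonneg
        (sub_nonpos.2 (hm (Ioo_subset_Icc_self hy) (Ioo_subset_Icc_self ht) h))
        (sub_nonneg.2 h)
    · exact div_nonpos_of_nonneg_of_nonpos
        (sub_nonneg.2 (hm (Ioo_subset_Icc_self ht) (Ioo_subset_Icc_self hy) h))
        (sub_nonpos.2 h)
end
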